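/- arXiv:2406.18325 — 2 statements merged into one kernel-verified Lean document; each statement's English description precedes it below -/
import Mathlib

section
/- Let c₁, c₂, c₃ ∈ 𝔽_p^* and set σ = Σ_{c ∈ 𝔽_p^*} Σ_{x ∈ 𝔽_p^*} χ̄₁(x(c−c₁)) Σ_{y ∈ 𝔽_p^*} χ̄₁(−y c₂) η̄(−cy) Σ_{z ∈ 𝔽_p^*} χ̄₁(−z²c/(4y) − z c₃). Then σ = (p² − 2p − 1)·Ḡ if c₃² − c₁c₂ = 0, and σ = −(p+1)·Ḡ − p·η̄(c₁c₂)·Ḡ if c₃² − c₁c₂ ≠ 0. -/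
open Finset
open scoped Classical

noncomputable section

/-- `ζ_p = exp(2πi/p)`. -/
def zeta (p : ℕ) : ℂ := Complex.exp (2 * Real.pi * Complex.I / p)

/-- The canonical additive character of `ℤ/p`: `χ̄₁(c) = ζ_p^c`. -/
def chiBar (p : ℕ) (c : ZMod p) : ℂ := zeta p ^ c.val

/-- The quadratic character of `(ℤ/p)^*`, extended by `η̄(0) = 0`. -/
def etaBar (p : ℕ) (c : ZMod p) : ℂ :=
  if c = 0 then 0 else if IsSquare c then 1 else -1

/-- The quadratic character of `F^*`, extended by `η(0) = 0`. -/
def etaQ (F : Type) [Field F] (x : F) : ℂ :=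
  if x = 0 then 0 else if IsSquare x then 1 else -1

/-- The absolute trace map from `F` to `ℤ/p`. -/
def Trq (p : ℕ) (F : Type) [Field F] [Algebra (ZMod p) F] (x : F) : ZMod p :=
  Algebra.trace (ZMod p) F x

/-- The canonical additive character of `F`: `χ₁(x) = ζ_p^{Tr x}`. -/
def chiQ (p : ℕ) (F : Type) [Field F] [Algebra (ZMod p) F] (x : F) : ℂ :=
  chiBar p (Trq p F x)

/-- The quadratic Gauss sum `G` over `F`. -/
def GaussQ (p : ℕ) (F : Type) [Field F] [Fintype F] [Algebra (ZMod p) F] : ℂ :=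
  ∑ x ∈ univ.filter (fun x : F => x ≠ 0), etaQ F x * chiQ p F x

/-- The quadratic Gauss sum `Ḡ` over `ℤ/p`. -/
def GaussP (p : ℕ) [NeZero p] : ℂ :=
  ∑ y ∈ univ.filter (fun y : ZMod p => y ≠ 0), etaBar p y * chiBar p y

theorem sum_nz (p : ℕ) [Fact (Nat.Prime p)] (f : ZMod p → ℂ) :
    ∑ x ∈ univ.filter (fun x : ZMod p => x ≠ 0), f x = ∑ x, f x - f 0 := by
  rw [Finset.filter_ne' univ (0 : ZMod p), Finset.sum_erase_eq_sub (mem_univ _)]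

theorem zeta_prim (p : ℕ) [Fact (Nat.Prime p)] : IsPrimitiveRoot (zeta p) p :=
  Complex.isPrimitiveRoot_exp p (Fact.out : p.Prime).ne_zero

theorem chi_zero (p : ℕ) [Fact (Nat.Prime p)] : chiBar p 0 = 1 := by
  simp [chiBar]

theorem chi_add (p : ℕ) [Fact (Nat.Prime p)] (a b : ZMod p) :
    chiBar p (a + b) = chiBar p a * chiBar p b :=
  AddChar.map_add_eq_mul (AddChar.zmodChar p (zeta_prim p).pow_eq_one) a b

theorem chi_sum (p : ℕ) [Fact (Nat.Prime p)] (b : ZMod p) :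
    ∑ x, chiBar p (x * b) = if b = 0 then (p : ℂ) else 0 := by
  have := AddChar.sum_mulShift b (AddChar.zmodChar_primitive_of_primitive_root p (zeta_prim p))
  rw [ZMod.card] at this
  push_cast at this
  exact this

theorem eta_eq (p : ℕ) [Fact (Nat.Prime p)] (a : ZMod p) :
    etaBar p a = ((quadraticChar (ZMod p) a : ℤ) : ℂ) := by
  rw [quadraticChar_apply, quadraticCharFun, etaBar]
  split_ifs <;> simp

theorem eta_zero (p : ℕ) [Fact (Nat.Prime p)] : etaBar p 0 = 0 := by simp [etaBar]

theorem eta_mul (p : ℕ) [Fact (Nat.Prime p)] (a b : ZMod p) :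
    etaBar p (a * b) = etaBar p a * etaBar p b := by
  rw [eta_eq, eta_eq, eta_eq, map_mul, Int.cast_mul]

theorem eta_sq (p : ℕ) [Fact (Nat.Prime p)] (a : ZMod p) (ha : a ≠ 0) :
    etaBar p a * etaBar p a = 1 := by
  rw [← eta_mul, etaBar, if_neg (mul_ne_zero ha ha), if_pos ⟨a, rfl⟩]

theorem char_ne (p : ℕ) [Fact (Nat.Prime p)] (hp : Odd p) : ringChar (ZMod p) ≠ 2 := by
  rw [ZMod.ringChar_zmod_n]
  rintro rfl
  exact absurd hp (by decide)

theorem eta_sum (p : ℕ) [Fact (Nat.Prime p)] (hp : Odd p) : ∑ a, etaBar p a = 0 := by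
  simp_rw [eta_eq]
  exact_mod_cast quadraticChar_sum_zero (char_ne p hp)

theorem sq_sum (p : ℕ) [Fact (Nat.Prime p)] (hp : Odd p) (f : ZMod p → ℂ) :
    ∑ z, f (z ^ 2) = ∑ u, (etaBar p u + 1) * f u := by
  rw [← Finset.sum_fiberwise univ (fun z : ZMod p => z ^ 2)]
  refine Finset.sum_congr rfl fun u _ => ?_
  rw [Finset.sum_congr rfl (g := fun _ => f u)
    (fun z hz => by rw [(Finset.mem_filter.mp hz).2]), Finset.sum_const, nsmul_eq_mul]
  congr 1
  have := quadraticChar_card_sqrts (char_ne p hp) u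
  rw [eta_eq]
  have h2 : (univ.filter (fun z : ZMod p => z ^ 2 = u)) = {x : ZMod p | x ^ 2 = u}.toFinset := by
    ext; simp
  rw [h2]
  exact_mod_cast this

theorem gaussP_eq (p : ℕ) [Fact (Nat.Prime p)] : GaussP p = ∑ y, etaBar p y * chiBar p y := by
  rw [GaussP, sum_nz, eta_zero]; simp

theorem gauss_shift (p : ℕ) [Fact (Nat.Prime p)] (a : ZMod p) (ha : a ≠ 0) :
    ∑ y, etaBar p y * chiBar p (y * a) = etaBar p a * GaussP p := by
  rw [gaussP_eq, ← Equiv.sum_comp (Equiv.mulRight₀ a ha) (fun y => etaBar p y * chiBar p y),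
    Finset.mul_sum]
  refine Finset.sum_congr rfl fun y _ => ?_
  simp only [Equiv.mulRight₀_apply, eta_mul]
  linear_combination (-(etaBar p y * chiBar p (y * a))) * eta_sq p a ha

theorem quad_sum (p : ℕ) [Fact (Nat.Prime p)] (hp : Odd p) (a b : ZMod p) (ha : a ≠ 0) :
    ∑ z, chiBar p (z ^ 2 * a + z * b) = etaBar p a * GaussP p * chiBar p (-(b ^ 2) / (4 * a)) := by
  have h2 : (2 : ZMod p) ≠ 0 := Ring.two_ne_zero (char_ne p hp)
  have h4 : (4 : ZMod p) ≠ 0 := by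
    have : (4 : ZMod p) = 2 * 2 := by norm_num
    rw [this]; exact mul_ne_zero h2 h2
  rw [← Equiv.sum_comp (Equiv.subRight (b / (2 * a)))]
  have : ∀ z : ZMod p, chiBar p ((Equiv.subRight (b / (2 * a)) z) ^ 2 * a +
      (Equiv.subRight (b / (2 * a)) z) * b)
      = chiBar p (z ^ 2 * a) * chiBar p (-(b ^ 2) / (4 * a)) := by
    intro z
    rw [← chi_add, Equiv.subRight_apply]
    congr 1
    have e : (4 : ZMod p) = 2 * 2 := by norm_num
    rw [e]
    field_simp
    ring
  simp_rw [this]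
  rw [← Finset.sum_mul, sq_sum p hp (fun u => chiBar p (u * a))]
  simp_rw [add_mul, one_mul]
  rw [Finset.sum_add_distrib, gauss_shift p a ha, chi_sum, if_neg ha, add_zero]

theorem T_eval (p : ℕ) [Fact (Nat.Prime p)] (hp : Odd p) (c c₂ c₃ : ZMod p)
    (hc : c ≠ 0) (hc₂ : c₂ ≠ 0) :
    ∑ y ∈ univ.filter (fun y : ZMod p => y ≠ 0), chiBar p (-(y * c₂)) * etaBar p (-(c * y)) *
        ∑ z ∈ univ.filter (fun z : ZMod p => z ≠ 0), chiBar p (-(z ^ 2 * c) / (4 * y) - z * c₃)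
      = GaussP p * ((if c = c₃ ^ 2 / c₂ then (p : ℂ) else 0) - 1 - etaBar p (c * c₂)) := by
  have h2 : (2 : ZMod p) ≠ 0 := Ring.two_ne_zero (char_ne p hp)
  have e4 : (4 : ZMod p) = 2 * 2 := by norm_num
  have h4 : (4 : ZMod p) ≠ 0 := by rw [e4]; exact mul_ne_zero h2 h2
  have key : ∀ y ∈ univ.filter (fun y : ZMod p => y ≠ 0),
      chiBar p (-(y * c₂)) * etaBar p (-(c * y)) *
        ∑ z ∈ univ.filter (fun z : ZMod p => z ≠ 0), chiBar p (-(z ^ 2 * c) / (4 * y) - z * c₃)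
      = GaussP p * chiBar p (y * (c₃ ^ 2 / c - c₂))
        - etaBar p (-c) * (etaBar p y * chiBar p (y * (-c₂))) := by
    intro y hy
    have hy : y ≠ 0 := (Finset.mem_filter.mp hy).2
    have hq : ∀ z : ZMod p, -(z ^ 2 * c) / (4 * y) - z * c₃
        = z ^ 2 * (-(c * y) * (1 / (2 * y)) ^ 2) + z * (-c₃) := by
      intro z; rw [e4]; field_simp; ring
    have hi : (1 / (2 * y)) ≠ 0 := one_div_ne_zero (mul_ne_zero h2 hy)
    have hn : -(c * y) ≠ 0 := neg_ne_zero.mpr (mul_ne_zero hc hy)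
    rw [sum_nz]
    simp_rw [hq]
    rw [quad_sum p hp _ _ (mul_ne_zero hn (pow_ne_zero 2 hi)), eta_mul p _ ((1 / (2 * y)) ^ 2),
      pow_two (1 / (2 * y)), eta_mul p (1 / (2 * y)), eta_sq p _ hi]
    have h0 : (0 : ZMod p) ^ 2 * (-(c * y) * (1 / (2 * y) * (1 / (2 * y)))) + 0 * (-c₃) = 0 := by
      ring
    rw [h0, chi_zero]
    have e1 : y * (c₃ ^ 2 / c - c₂) = -(y * c₂) +
        -((-c₃) ^ 2) / (4 * (-(c * y) * (1 / (2 * y) * (1 / (2 * y))))) := by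
      rw [e4]; field_simp; ring
    have e2 : etaBar p (-(c * y)) = etaBar p (-c) * etaBar p y := by
      rw [← eta_mul]; congr 1; ring
    have e3 : y * (-c₂) = -(y * c₂) := by ring
    rw [e1, e3, chi_add]
    have := eta_sq p _ hn
    linear_combination (chiBar p (-(y * c₂)) * GaussP p * chiBar p
      (-((-c₃) ^ 2) / (4 * (-(c * y) * (1 / (2 * y) * (1 / (2 * y))))))) * this
      - chiBar p (-(y * c₂)) * e2
  rw [Finset.sum_congr rfl key, sum_nz, Finset.sum_sub_distrib, ← Finset.mul_sum, ← Finset.mul_sum,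
    chi_sum, gauss_shift p _ (neg_ne_zero.mpr hc₂), eta_zero, zero_mul, chi_zero]
  have e5 : c₃ ^ 2 / c - c₂ = 0 ↔ c = c₃ ^ 2 / c₂ := by
    rw [sub_eq_zero, div_eq_iff hc, eq_div_iff hc₂, eq_comm, mul_comm]
  have e6 : etaBar p (c * c₂) = etaBar p (-c) * etaBar p (-c₂) := by
    rw [← eta_mul]; congr 1; ring
  rw [e6]
  simp only [e5]
  ring

theorem sigma_all (p : ℕ) [Fact (Nat.Prime p)] (hp : Odd p)
    (c₁ c₂ c₃ : ZMod p) (hc₁ : c₁ ≠ 0) (hc₂ : c₂ ≠ 0) (hc₃ : c₃ ≠ 0) :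
    (∑ c ∈ univ.filter (fun c : ZMod p => c ≠ 0), ∑ x ∈ univ.filter (fun x : ZMod p => x ≠ 0), chiBar p (x * (c - c₁)) *
      ∑ y ∈ univ.filter (fun y : ZMod p => y ≠ 0), chiBar p (-(y * c₂)) * etaBar p (-(c * y)) *
        ∑ z ∈ univ.filter (fun z : ZMod p => z ≠ 0), chiBar p (-(z ^ 2 * c) / (4 * y) - z * c₃))
    = GaussP p * ((if c₁ = c₃ ^ 2 / c₂ then (p : ℂ) ^ 2 else 0) - p - p * etaBar p (c₁ * c₂) - 1) := by
  have key : ∀ c ∈ univ.filter (fun c : ZMod p => c ≠ 0),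
      ∑ x ∈ univ.filter (fun x : ZMod p => x ≠ 0), chiBar p (x * (c - c₁)) *
      ∑ y ∈ univ.filter (fun y : ZMod p => y ≠ 0), chiBar p (-(y * c₂)) * etaBar p (-(c * y)) *
        ∑ z ∈ univ.filter (fun z : ZMod p => z ≠ 0), chiBar p (-(z ^ 2 * c) / (4 * y) - z * c₃)
      = (if c = c₁ then p * (GaussP p * ((if c = c₃ ^ 2 / c₂ then (p : ℂ) else 0) - 1 - etaBar p (c * c₂))) else 0)
       - (GaussP p * ((if c = c₃ ^ 2 / c₂ then (p : ℂ) else 0) - 1 - etaBar p c * etaBar p c₂)) := by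
    intro c hc
    rw [← Finset.sum_mul, T_eval p hp c c₂ c₃ (Finset.mem_filter.mp hc).2 hc₂, sum_nz, chi_sum,
      zero_mul, chi_zero, ← eta_mul]
    simp only [sub_eq_zero]
    by_cases h : c = c₁
    · simp only [h, if_true]; ring
    · simp only [h, if_false]; ring
  have h0 : (0 : ZMod p) ≠ c₃ ^ 2 / c₂ := (div_ne_zero (pow_ne_zero 2 hc₃) hc₂).symm
  rw [Finset.sum_congr rfl key, sum_nz, Finset.sum_sub_distrib, Finset.sum_ite_eq' univ c₁,
    if_pos (mem_univ _), ← Finset.mul_sum, Finset.sum_sub_distrib, Finset.sum_sub_distrib,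
    Finset.sum_ite_eq' univ (c₃ ^ 2 / c₂), if_pos (mem_univ _), ← Finset.sum_mul, eta_sum p hp,
    if_neg h0, if_neg hc₁.symm, eta_zero]
  simp only [Finset.sum_const, Finset.card_univ, ZMod.card, nsmul_eq_mul]
  split_ifs <;> ring

theorem sigma_eval (p : ℕ) [Fact (Nat.Prime p)] (hp : Odd p)
    (c₁ c₂ c₃ : ZMod p) (hc₁ : c₁ ≠ 0) (hc₂ : c₂ ≠ 0) (hc₃ : c₃ ≠ 0) :
    (c₃ ^ 2 - c₁ * c₂ = 0 →
      (∑ c ∈ univ.filter (fun c : ZMod p => c ≠ 0), ∑ x ∈ univ.filter (fun x : ZMod p => x ≠ 0), chiBar p (x * (c - c₁)) *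
      ∑ y ∈ univ.filter (fun y : ZMod p => y ≠ 0), chiBar p (-(y * c₂)) * etaBar p (-(c * y)) *
        ∑ z ∈ univ.filter (fun z : ZMod p => z ≠ 0), chiBar p (-(z ^ 2 * c) / (4 * y) - z * c₃)) = ((p : ℂ) ^ 2 - 2 * (p : ℂ) - 1) * GaussP p) ∧
    (c₃ ^ 2 - c₁ * c₂ ≠ 0 →
      (∑ c ∈ univ.filter (fun c : ZMod p => c ≠ 0), ∑ x ∈ univ.filter (fun x : ZMod p => x ≠ 0), chiBar p (x * (c - c₁)) *
      ∑ y ∈ univ.filter (fun y : ZMod p => y ≠ 0), chiBar p (-(y * c₂)) * etaBar p (-(c * y)) *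
        ∑ z ∈ univ.filter (fun z : ZMod p => z ≠ 0), chiBar p (-(z ^ 2 * c) / (4 * y) - z * c₃)) = -(((p : ℂ) + 1) * GaussP p) - (p : ℂ) * etaBar p (c₁ * c₂) * GaussP p) := by
  rw [sigma_all p hp c₁ c₂ c₃ hc₁ hc₂ hc₃]
  have e : c₁ = c₃ ^ 2 / c₂ ↔ c₃ ^ 2 - c₁ * c₂ = 0 := by
    rw [eq_div_iff hc₂, sub_eq_zero, eq_comm]
  constructor
  · intro h
    have h1 : etaBar p (c₁ * c₂) = 1 := by
      rw [← sub_eq_zero.mp h, pow_two, eta_mul, eta_sq p _ hc₃]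
    rw [if_pos (e.mpr h), h1]; ring
  · intro h
    rw [if_neg (fun h' => h (e.mp h'))]; ring
end
end

section
/- Let c₁, c₂, c₃ ∈ 𝔽_p and set Ψ₄ = Σ_{a,b ∈ 𝔽_q} Σ_{x ∈ 𝔽_p^*} ζ_p^{x·Tr(a²) − x c₁} Σ_{y ∈ 𝔽_p^*} ζ_p^{y·Tr(b²) − y c₂} Σ_{z ∈ 𝔽_p^*} ζ_p^{z·Tr(ab) − z c₃}. If m is even, then: Ψ₄ = (p−1)²(p^m + G(p−2))G if c₁ = c₂ = c₃ = 0; Ψ₄ = −(p−1)(p^m + G(p−2))G if exactly one of c₁, c₂, c₃ is nonzero; Ψ₄ = (p^m + G(p−2))G + η̄(−c₁c₂)(p^{m+1} − pG)G if c₁ ≠ 0, c₂ ≠ 0 and c₃ = 0; Ψ₄ = G(p^m − 2G) if all c_i ≠ 0 and c₃² − c₁c₂ = 0; Ψ₄ = G(p+1)(p^m − G) − G² if all c_i ≠ 0 and η̄(c₃² − c₁c₂) = 1; Ψ₄ = −G(p−1)(p^m − G) − G² if all c_i ≠ 0 and η̄(c₃² − c₁c₂) = −1; and Ψ₄ = (p^m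 + G(p−2))G if c₃ ≠ 0 and exactly one of c₁, c₂ is zero. -/
open Finset
open scoped Classical

noncomputable section

lemma chiBar_eq (p : ℕ) [NeZero p] (c : ZMod p) : chiBar p c = ZMod.stdAddChar c := by
  have h := ZMod.stdAddChar_coe (N := p) (c.val : ℤ)
  rw [Int.cast_natCast, ZMod.natCast_zmod_val] at h
  rw [h, chiBar, zeta, ← Complex.exp_nat_mul]
  congr 1
  push_cast
  ring

lemma sum_trace_char (p : ℕ) [Fact (Nat.Prime p)] (F : Type) [Field F] [Fintype F]
    [Algebra (ZMod p) F] : ∑ v : F, chiBar p (Trq p F v) = 0 := by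
  obtain ⟨w, hw⟩ := Algebra.trace_surjective (ZMod p) F 1
  have h1 : ∑ v : F, chiBar p (Trq p F (v + w)) = ∑ v : F, chiBar p (Trq p F v) :=
    Equiv.sum_comp (Equiv.addRight w) (fun v => chiBar p (Trq p F v))
  have h2 : ∑ v : F, chiBar p (Trq p F (v + w))
      = (∑ v : F, chiBar p (Trq p F v)) * ZMod.stdAddChar (1 : ZMod p) := by
    rw [Finset.sum_mul]
    refine Finset.sum_congr rfl fun v _ => ?_
    simp only [chiBar_eq, Trq, map_add, hw, AddChar.map_add_eq_mul]
  have h3 : ZMod.stdAddChar (1 : ZMod p) ≠ (1 : ℂ) := by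
    intro h
    rw [← (ZMod.stdAddChar (N := p)).map_zero_eq_one, ZMod.injective_stdAddChar.eq_iff] at h
    exact one_ne_zero h
  rw [h1] at h2
  by_contra h0
  exact h3 (mul_left_cancel₀ h0 (by rw [← h2, mul_one]))

lemma etaQ_eq (F : Type) [Field F] [Fintype F] (x : F) :
    etaQ F x = ((quadraticChar F x : ℤ) : ℂ) := by
  rw [etaQ, quadraticChar_apply, quadraticCharFun]
  split_ifs <;> simp

lemma etaBar_eq (p : ℕ) [Fact (Nat.Prime p)] (x : ZMod p) :
    etaBar p x = ((quadraticChar (ZMod p) x : ℤ) : ℂ) := by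
  rw [etaBar, quadraticChar_apply, quadraticCharFun]
  split_ifs <;> simp

lemma card_sqrts (F : Type) [Field F] [Fintype F] (hF : ringChar F ≠ 2) (v : F) :
    ((univ.filter (fun x : F => x ^ 2 = v)).card : ℂ) = etaQ F v + 1 := by
  have h := quadraticChar_card_sqrts hF v
  rw [etaQ_eq]
  have h2 : (univ.filter (fun x : F => x ^ 2 = v)) = {x : F | x ^ 2 = v}.toFinset := by
    ext; simp
  rw [h2]
  exact_mod_cast h

lemma sum_sq_char (p : ℕ) [Fact (Nat.Prime p)] (F : Type) [Field F] [Fintype F]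
    [Algebra (ZMod p) F] (hF : ringChar F ≠ 2) :
    ∑ u : F, chiBar p (Trq p F (u ^ 2)) = GaussQ p F := by
  have h1 : ∑ u : F, chiBar p (Trq p F (u ^ 2))
      = ∑ v : F, ∑ u ∈ univ.filter (fun u : F => u ^ 2 = v), chiBar p (Trq p F (u ^ 2)) :=
    (Finset.sum_fiberwise _ _ _).symm
  have h2 : ∀ v : F, ∑ u ∈ univ.filter (fun u : F => u ^ 2 = v), chiBar p (Trq p F (u ^ 2))
      = etaQ F v * chiQ p F v + chiBar p (Trq p F v) := by
    intro v
    rw [Finset.sum_congr rfl (g := fun _ => chiBar p (Trq p F v))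
      (fun u hu => by rw [(Finset.mem_filter.mp hu).2])]
    rw [Finset.sum_const, nsmul_eq_mul, card_sqrts F hF, chiQ]
    ring
  rw [h1, Finset.sum_congr rfl (fun v _ => h2 v), Finset.sum_add_distrib, sum_trace_char, add_zero,
    GaussQ, Finset.sum_filter]
  refine Finset.sum_congr rfl fun v _ => ?_
  by_cases hv : v = 0 <;> simp [hv, etaQ]

lemma base_isSquare (p m : ℕ) [Fact (Nat.Prime p)] (hp : Odd p)
    (F : Type) [Field F] [Fintype F] [Algebra (ZMod p) F] (hF : ringChar F ≠ 2)
    (hq : Fintype.card F = p ^ m) (hmeven : Even m) (x : ZMod p) (hx : x ≠ 0) :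
    ∃ s : F, s ≠ 0 ∧ s ^ 2 = algebraMap (ZMod p) F x := by
  have hx' : algebraMap (ZMod p) F x ≠ 0 := by simpa using hx
  have h : IsSquare (algebraMap (ZMod p) F x) := by
    rw [FiniteField.isSquare_iff hF hx', hq]
    obtain ⟨k, rfl⟩ := hmeven
    obtain ⟨j, hj⟩ := hp.pow (n := k)
    have h1 : x ^ (2 * j) = 1 := by
      have h2 := ZMod.pow_card_pow (n := k) x
      rw [hj, pow_succ] at h2
      exact mul_right_cancel₀ hx (by rw [h2, one_mul])
    have h3 : p ^ (k + k) / 2 = (2 * j) * (j + 1) := by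
      rw [pow_add, hj]
      have : (2 * j + 1) * (2 * j + 1) = 2 * ((2 * j) * (j + 1)) + 1 := by ring
      omega
    rw [h3, ← map_pow, pow_mul, h1, one_pow, map_one]
  obtain ⟨s, hs⟩ := h
  refine ⟨s, ?_, by rw [hs, sq]⟩
  rintro rfl
  exact hx' (by simpa using hs)

lemma Trq_mul (p : ℕ) [Fact (Nat.Prime p)] (F : Type) [Field F] [Algebra (ZMod p) F]
    (x : ZMod p) (a : F) : Trq p F (algebraMap (ZMod p) F x * a) = x * Trq p F a := by
  rw [Trq, ← Algebra.smul_def, map_smul, smul_eq_mul, Trq]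

lemma sum_mul_sq (p m : ℕ) [Fact (Nat.Prime p)] (hp : Odd p)
    (F : Type) [Field F] [Fintype F] [Algebra (ZMod p) F] (hF : ringChar F ≠ 2)
    (hq : Fintype.card F = p ^ m) (hmeven : Even m) (x : ZMod p) (hx : x ≠ 0) :
    ∑ u : F, chiBar p (x * Trq p F (u ^ 2)) = GaussQ p F := by
  obtain ⟨s, hs0, hs⟩ := base_isSquare p m hp F hF hq hmeven x hx
  rw [← sum_sq_char p F hF]
  rw [← Equiv.sum_comp (Equiv.mulLeft₀ s hs0) (fun u => chiBar p (Trq p F (u ^ 2)))]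
  refine Finset.sum_congr rfl fun u _ => ?_
  rw [← Trq_mul, ← hs]
  simp [mul_pow]

lemma sum_quad (p m : ℕ) [Fact (Nat.Prime p)] (hp : Odd p)
    (F : Type) [Field F] [Fintype F] [Algebra (ZMod p) F] (hF : ringChar F ≠ 2)
    (h2 : (2 : ZMod p) ≠ 0)
    (hq : Fintype.card F = p ^ m) (hmeven : Even m) (x y z : ZMod p) (hx : x ≠ 0) :
    ∑ a : F, ∑ b : F, chiBar p (x * Trq p F (a ^ 2) + y * Trq p F (b ^ 2) + z * Trq p F (a * b))
      = GaussQ p F * (if y = z ^ 2 / (4 * x) then (p : ℂ) ^ m else GaussQ p F) := by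
  have h4 : (4 : ZMod p) ≠ 0 := by
    have : (4 : ZMod p) = 2 * 2 := by norm_num
    rw [this]; exact mul_ne_zero h2 h2
  rw [Finset.sum_comm]
  have key : ∀ b : F, ∑ a : F,
      chiBar p (x * Trq p F (a ^ 2) + y * Trq p F (b ^ 2) + z * Trq p F (a * b))
      = GaussQ p F * chiBar p ((y - z ^ 2 / (4 * x)) * Trq p F (b ^ 2)) := by
    intro b
    rw [← sum_mul_sq p m hp F hF hq hmeven x hx, Finset.sum_mul]
    rw [← Equiv.sum_comp (Equiv.subRight (algebraMap (ZMod p) F (z / (2 * x)) * b))]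
    refine Finset.sum_congr rfl fun a _ => ?_
    rw [chiBar_eq, chiBar_eq, chiBar_eq, ← AddChar.map_add_eq_mul]
    congr 1
    have e1 : (a - algebraMap (ZMod p) F (z / (2 * x)) * b) ^ 2
        = a ^ 2 + algebraMap (ZMod p) F (-(2 * (z / (2 * x)))) * (a * b)
          + algebraMap (ZMod p) F ((z / (2 * x)) ^ 2) * b ^ 2 := by
      simp only [map_neg, map_mul, map_pow, map_ofNat]; ring
    have e2 : (a - algebraMap (ZMod p) F (z / (2 * x)) * b) * b
        = a * b + algebraMap (ZMod p) F (-(z / (2 * x))) * b ^ 2 := by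
      simp only [map_neg]; ring
    have hadd : ∀ s t : F, Trq p F (s + t) = Trq p F s + Trq p F t := fun s t => by
      simp [Trq]
    simp only [Equiv.subRight_apply]
    rw [e1, e2]
    simp only [hadd, Trq_mul]
    field_simp
    ring
  rw [Finset.sum_congr rfl (fun b _ => key b), ← Finset.mul_sum]
  congr 1
  split_ifs with h
  · rw [sub_eq_zero.mpr h]
    simp [chiBar, hq]
  · exact sum_mul_sq p m hp F hF hq hmeven _ (sub_ne_zero.mpr h)

/-- `e(c) = ∑_{x ≠ 0} ζ^{-xc}`. -/
lemma sum_nonzero (p : ℕ) [Fact (Nat.Prime p)] (c : ZMod p) :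
    ∑ x ∈ univ.filter (fun x : ZMod p => x ≠ 0), chiBar p (-(x * c))
      = (p : ℂ) * (if c = 0 then 1 else 0) - 1 := by
  have h := AddChar.sum_mulShift (-c) (ZMod.isPrimitive_stdAddChar p)
  have h2 := Finset.sum_filter_add_sum_filter_not univ (fun x : ZMod p => x ≠ 0)
    (fun x => chiBar p (-(x * c)))
  have h3 : (univ.filter (fun x : ZMod p => ¬ x ≠ 0)) = {0} := by ext; simp
  rw [h3, Finset.sum_singleton] at h2
  have h4 : ∑ x : ZMod p, chiBar p (-(x * c)) = if -c = 0 then (Fintype.card (ZMod p) : ℂ) else 0 := by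
    rw [← Nat.cast_zero (R := ℂ), ← Nat.cast_ite, ← h]
    · simp [chiBar_eq]
  rw [h4] at h2
  simp only [neg_eq_zero, ZMod.card] at h2
  have h5 : chiBar p (-(0 * c)) = 1 := by simp [chiBar]
  rw [h5] at h2
  rw [eq_sub_iff_add_eq, h2]
  split_ifs <;> simp

lemma sum_T (p : ℕ) [Fact (Nat.Prime p)] (h2 : (2 : ZMod p) ≠ 0) (c₁ c₂ c₃ : ZMod p) :
    ∑ x ∈ univ.filter (fun x : ZMod p => x ≠ 0), ∑ y ∈ univ.filter (fun y : ZMod p => y ≠ 0),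
      ∑ z ∈ univ.filter (fun z : ZMod p => z ≠ 0),
        (if y = z ^ 2 / (4 * x) then chiBar p (-(x * c₁) - y * c₂ - z * c₃) else 0)
      = (p : ℂ) * ((univ.filter (fun t : ZMod p => t ≠ 0 ∧ c₂ * t ^ 2 + 2 * c₃ * t + c₁ = 0)).card : ℂ)
        - ((p : ℂ) - 1) := by
  have h4 : (4 : ZMod p) ≠ 0 := by
    have : (4 : ZMod p) = 2 * 2 := by norm_num
    rw [this]; exact mul_ne_zero h2 h2
  have key : ∀ x ∈ univ.filter (fun x : ZMod p => x ≠ 0),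
      ∑ y ∈ univ.filter (fun y : ZMod p => y ≠ 0),
      ∑ z ∈ univ.filter (fun z : ZMod p => z ≠ 0),
        (if y = z ^ 2 / (4 * x) then chiBar p (-(x * c₁) - y * c₂ - z * c₃) else 0)
      = ∑ t ∈ univ.filter (fun t : ZMod p => t ≠ 0),
        chiBar p (-(x * (c₂ * t ^ 2 + 2 * c₃ * t + c₁))) := by
    intro x hx
    have hx0 : x ≠ 0 := by simpa using hx
    rw [Finset.sum_comm]
    refine Finset.sum_bij' (fun z _ => z / (2 * x)) (fun t _ => 2 * x * t) ?_ ?_ ?_ ?_ ?_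
    · intro z hz
      have hz0 : z ≠ 0 := by simpa using hz
      simp [hz0, hx0, h2]
    · intro z hz
      have hz0 : z ≠ 0 := by simpa using hz
      simp [hz0, hx0, h2]
    · intro z hz
      field_simp
    · intro z hz
      field_simp
    · intro z hz
      have hz0 : z ≠ 0 := by simpa using hz
      rw [Finset.sum_ite_eq', if_pos (by simp [hz0, hx0, h4])]
      congr 1
      field_simp
      ring
  rw [Finset.sum_congr rfl key, Finset.sum_comm, Finset.sum_congr rfl (fun t _ => sum_nonzero p _),
    Finset.sum_sub_distrib, ← Finset.mul_sum, Finset.sum_boole, Finset.filter_filter]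
  congr 1
  have h3 : (univ.filter (fun x : ZMod p => x ≠ 0)) = univ.erase 0 := by ext; simp
  rw [h3]
  simp [Finset.card_erase_of_mem, ZMod.card, Nat.cast_sub (Fact.out : p.Prime).one_le]

lemma Psi4_general (p m : ℕ) [Fact (Nat.Prime p)] (hp : Odd p)
    (F : Type) [Field F] [Fintype F] [Algebra (ZMod p) F] (hF : ringChar F ≠ 2)
    (h2 : (2 : ZMod p) ≠ 0)
    (hq : Fintype.card F = p ^ m) (hmeven : Even m) (c₁ c₂ c₃ : ZMod p) :
      (∑ a : F, ∑ b : F,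
      (∑ x ∈ univ.filter (fun x : ZMod p => x ≠ 0), chiBar p (x * Trq p F (a ^ 2) - x * c₁)) *
      (∑ y ∈ univ.filter (fun y : ZMod p => y ≠ 0), chiBar p (y * Trq p F (b ^ 2) - y * c₂)) *
      (∑ z ∈ univ.filter (fun z : ZMod p => z ≠ 0), chiBar p (z * Trq p F (a * b) - z * c₃)))
    = GaussQ p F ^ 2 * (((p : ℂ) * (if c₁ = 0 then 1 else 0) - 1)
        * ((p : ℂ) * (if c₂ = 0 then 1 else 0) - 1) * ((p : ℂ) * (if c₃ = 0 then 1 else 0) - 1))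
      + (GaussQ p F * (p : ℂ) ^ m - GaussQ p F ^ 2) *
      ((p : ℂ) * ((univ.filter (fun t : ZMod p => t ≠ 0 ∧ c₂ * t ^ 2 + 2 * c₃ * t + c₁ = 0)).card : ℂ)
        - ((p : ℂ) - 1)) := by
  rw [← sum_T p h2, ← sum_nonzero, ← sum_nonzero, ← sum_nonzero]
  have exp3 : ∀ f g h : ZMod p → ℂ, ∀ s : Finset (ZMod p),
      (∑ x ∈ s, f x) * (∑ y ∈ s, g y) * (∑ z ∈ s, h z)
        = ∑ x ∈ s, ∑ y ∈ s, ∑ z ∈ s, f x * g y * h z := by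
    intro f g h s
    rw [Finset.sum_mul_sum, Finset.sum_mul]
    exact Finset.sum_congr rfl fun x _ => Finset.sum_mul_sum s s _ _
  simp only [exp3]
  have swap : ∀ f : F → F → ZMod p → ZMod p → ZMod p → ℂ, ∀ s : Finset (ZMod p),
      ∑ a : F, ∑ b : F, ∑ x ∈ s, ∑ y ∈ s, ∑ z ∈ s, f a b x y z
        = ∑ x ∈ s, ∑ y ∈ s, ∑ z ∈ s, ∑ a : F, ∑ b : F, f a b x y z := by
    intro f s
    simp only [Finset.sum_comm (s := (univ : Finset F)) (t := s)]
  rw [swap, Finset.mul_sum, Finset.mul_sum, ← Finset.sum_add_distrib]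
  refine Finset.sum_congr rfl fun x hx => ?_
  rw [Finset.mul_sum, Finset.mul_sum, ← Finset.sum_add_distrib]
  refine Finset.sum_congr rfl fun y hy => ?_
  rw [Finset.mul_sum, Finset.mul_sum, ← Finset.sum_add_distrib]
  refine Finset.sum_congr rfl fun z hz => ?_
  have hx0 : x ≠ 0 := by simpa using hx
  have e : ∀ a b : F, chiBar p (x * Trq p F (a ^ 2) - x * c₁) *
      chiBar p (y * Trq p F (b ^ 2) - y * c₂) * chiBar p (z * Trq p F (a * b) - z * c₃)
      = chiBar p (-(x * c₁) - y * c₂ - z * c₃) *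
        chiBar p (x * Trq p F (a ^ 2) + y * Trq p F (b ^ 2) + z * Trq p F (a * b)) := by
    intro a b
    simp only [chiBar_eq, ← AddChar.map_add_eq_mul]
    congr 1
    ring
  have e' : chiBar p (-(x * c₁)) * chiBar p (-(y * c₂)) * chiBar p (-(z * c₃))
      = chiBar p (-(x * c₁) - y * c₂ - z * c₃) := by
    simp only [chiBar_eq, ← AddChar.map_add_eq_mul]
    congr 1
    ring
  simp only [e, ← Finset.mul_sum]
  rw [sum_quad p m hp F hF h2 hq hmeven x y z hx0, e']
  split_ifs <;> ring

/-- number of roots when the leading coefficient is nonzero -/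
lemma card_roots (p : ℕ) [Fact (Nat.Prime p)] (h2 : (2 : ZMod p) ≠ 0) (hp2 : ringChar (ZMod p) ≠ 2)
    (c₁ c₂ c₃ : ZMod p) (hc₁ : c₁ ≠ 0) (hc₂ : c₂ ≠ 0) :
    ((univ.filter (fun t : ZMod p => t ≠ 0 ∧ c₂ * t ^ 2 + 2 * c₃ * t + c₁ = 0)).card : ℂ)
      = etaBar p (c₃ ^ 2 - c₁ * c₂) + 1 := by
  rw [show etaBar p (c₃ ^ 2 - c₁ * c₂) = etaQ (ZMod p) (c₃ ^ 2 - c₁ * c₂) by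
    rw [etaBar, etaQ]; split_ifs <;> rfl,
    ← card_sqrts (ZMod p) hp2]
  congr 1
  refine Finset.card_bij' (fun t _ => c₂ * t + c₃) (fun u _ => (u - c₃) / c₂) ?_ ?_ ?_ ?_
  · intro t ht
    simp only [Finset.mem_filter, Finset.mem_univ, true_and] at ht ⊢
    linear_combination c₂ * ht.2
  · intro u hu
    simp only [Finset.mem_filter, Finset.mem_univ, true_and] at hu ⊢
    have h : c₂ * ((u - c₃) / c₂) ^ 2 + 2 * c₃ * ((u - c₃) / c₂) + c₁ = 0 := by
      field_simp
      linear_combination hu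
    refine ⟨fun h0 => hc₁ ?_, h⟩
    rw [h0] at h
    simpa using h
  · intro t _
    field_simp
    ring
  · intro u _
    field_simp
    ring

theorem Psi4_eval_m_even (p m : ℕ) [Fact (Nat.Prime p)] (hp : Odd p)
    (F : Type) [Field F] [Fintype F] [Algebra (ZMod p) F]
    (hm : 0 < m) (hq : Fintype.card F = p ^ m)
    (hmeven : Even m) (c₁ c₂ c₃ : ZMod p) :
    (c₁ = 0 ∧ c₂ = 0 ∧ c₃ = 0 →
      (∑ a : F, ∑ b : F,
      (∑ x ∈ univ.filter (fun x : ZMod p => x ≠ 0), chiBar p (x * Trq p F (a ^ 2) - x * c₁)) *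
      (∑ y ∈ univ.filter (fun y : ZMod p => y ≠ 0), chiBar p (y * Trq p F (b ^ 2) - y * c₂)) *
      (∑ z ∈ univ.filter (fun z : ZMod p => z ≠ 0), chiBar p (z * Trq p F (a * b) - z * c₃))) = ((p : ℂ) - 1) ^ 2 * ((p : ℂ) ^ m + GaussQ p F * ((p : ℂ) - 2)) * GaussQ p F) ∧
    ((c₁ ≠ 0 ∧ c₂ = 0 ∧ c₃ = 0) ∨ (c₁ = 0 ∧ c₂ ≠ 0 ∧ c₃ = 0) ∨ (c₁ = 0 ∧ c₂ = 0 ∧ c₃ ≠ 0) →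
      (∑ a : F, ∑ b : F,
      (∑ x ∈ univ.filter (fun x : ZMod p => x ≠ 0), chiBar p (x * Trq p F (a ^ 2) - x * c₁)) *
      (∑ y ∈ univ.filter (fun y : ZMod p => y ≠ 0), chiBar p (y * Trq p F (b ^ 2) - y * c₂)) *
      (∑ z ∈ univ.filter (fun z : ZMod p => z ≠ 0), chiBar p (z * Trq p F (a * b) - z * c₃))) = -(((p : ℂ) - 1) * ((p : ℂ) ^ m + GaussQ p F * ((p : ℂ) - 2)) * GaussQ p F)) ∧
    (c₁ ≠ 0 ∧ c₂ ≠ 0 ∧ c₃ = 0 →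
      (∑ a : F, ∑ b : F,
      (∑ x ∈ univ.filter (fun x : ZMod p => x ≠ 0), chiBar p (x * Trq p F (a ^ 2) - x * c₁)) *
      (∑ y ∈ univ.filter (fun y : ZMod p => y ≠ 0), chiBar p (y * Trq p F (b ^ 2) - y * c₂)) *
      (∑ z ∈ univ.filter (fun z : ZMod p => z ≠ 0), chiBar p (z * Trq p F (a * b) - z * c₃))) = ((p : ℂ) ^ m + GaussQ p F * ((p : ℂ) - 2)) * GaussQ p F + etaBar p (-(c₁ * c₂)) * ((p : ℂ) ^ (m + 1) - (p : ℂ) * GaussQ p F) * GaussQ p F) ∧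
    ((c₁ ≠ 0 ∧ c₂ ≠ 0 ∧ c₃ ≠ 0) ∧ c₃ ^ 2 - c₁ * c₂ = 0 →
      (∑ a : F, ∑ b : F,
      (∑ x ∈ univ.filter (fun x : ZMod p => x ≠ 0), chiBar p (x * Trq p F (a ^ 2) - x * c₁)) *
      (∑ y ∈ univ.filter (fun y : ZMod p => y ≠ 0), chiBar p (y * Trq p F (b ^ 2) - y * c₂)) *
      (∑ z ∈ univ.filter (fun z : ZMod p => z ≠ 0), chiBar p (z * Trq p F (a * b) - z * c₃))) = GaussQ p F * ((p : ℂ) ^ m - 2 * GaussQ p F)) ∧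
    ((c₁ ≠ 0 ∧ c₂ ≠ 0 ∧ c₃ ≠ 0) ∧ etaBar p (c₃ ^ 2 - c₁ * c₂) = 1 →
      (∑ a : F, ∑ b : F,
      (∑ x ∈ univ.filter (fun x : ZMod p => x ≠ 0), chiBar p (x * Trq p F (a ^ 2) - x * c₁)) *
      (∑ y ∈ univ.filter (fun y : ZMod p => y ≠ 0), chiBar p (y * Trq p F (b ^ 2) - y * c₂)) *
      (∑ z ∈ univ.filter (fun z : ZMod p => z ≠ 0), chiBar p (z * Trq p F (a * b) - z * c₃))) = GaussQ p F * ((p : ℂ) + 1) * ((p : ℂ) ^ m - GaussQ p F) - (GaussQ p F) ^ 2) ∧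
    ((c₁ ≠ 0 ∧ c₂ ≠ 0 ∧ c₃ ≠ 0) ∧ etaBar p (c₃ ^ 2 - c₁ * c₂) = -1 →
      (∑ a : F, ∑ b : F,
      (∑ x ∈ univ.filter (fun x : ZMod p => x ≠ 0), chiBar p (x * Trq p F (a ^ 2) - x * c₁)) *
      (∑ y ∈ univ.filter (fun y : ZMod p => y ≠ 0), chiBar p (y * Trq p F (b ^ 2) - y * c₂)) *
      (∑ z ∈ univ.filter (fun z : ZMod p => z ≠ 0), chiBar p (z * Trq p F (a * b) - z * c₃))) = -(GaussQ p F * ((p : ℂ) - 1) * ((p : ℂ) ^ m - GaussQ p F)) - (GaussQ p F) ^ 2) ∧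
    (c₃ ≠ 0 ∧ ((c₁ = 0 ∧ c₂ ≠ 0) ∨ (c₁ ≠ 0 ∧ c₂ = 0)) →
      (∑ a : F, ∑ b : F,
      (∑ x ∈ univ.filter (fun x : ZMod p => x ≠ 0), chiBar p (x * Trq p F (a ^ 2) - x * c₁)) *
      (∑ y ∈ univ.filter (fun y : ZMod p => y ≠ 0), chiBar p (y * Trq p F (b ^ 2) - y * c₂)) *
      (∑ z ∈ univ.filter (fun z : ZMod p => z ≠ 0), chiBar p (z * Trq p F (a * b) - z * c₃))) = ((p : ℂ) ^ m + GaussQ p F * ((p : ℂ) - 2)) * GaussQ p F) := by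

  have hp2 : p ≠ 2 := by rintro rfl; exact absurd hp (by decide)
  have h2 : (2 : ZMod p) ≠ 0 := by
    intro h
    have h' : ((2 : ℕ) : ZMod p) = 0 := by exact_mod_cast h
    rw [ZMod.natCast_eq_zero_iff] at h'
    exact hp2 ((Nat.prime_dvd_prime_iff_eq Fact.out Nat.prime_two).mp h')
  have hchar : ∀ (K : Type) [Field K] [Algebra (ZMod p) K], ringChar K ≠ 2 := by
    intro K _ _
    haveI : CharP K p := charP_of_injective_algebraMap (algebraMap (ZMod p) K).injective p
    rw [ringChar.eq K p]
    exact hp2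
  rw [Psi4_general p m hp F (hchar F) h2 hq hmeven c₁ c₂ c₃]
  have cr := card_roots p h2 (hchar (ZMod p)) c₁ c₂ c₃
  refine ⟨?_, ?_, ?_, ?_, ?_, ?_, ?_⟩
  · rintro ⟨rfl, rfl, rfl⟩
    have hN : (univ.filter (fun t : ZMod p => t ≠ 0 ∧
        (0 : ZMod p) * t ^ 2 + 2 * 0 * t + 0 = 0)) = univ.erase 0 := by ext; simp
    rw [hN, Finset.card_erase_of_mem (Finset.mem_univ _), Finset.card_univ, ZMod.card,
      Nat.cast_sub (Fact.out : p.Prime).one_le]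
    simp
    ring
  · intro h
    have hN : (univ.filter (fun t : ZMod p => t ≠ 0 ∧ c₂ * t ^ 2 + 2 * c₃ * t + c₁ = 0)) = ∅ := by
      rcases h with ⟨h, rfl, rfl⟩ | ⟨rfl, h, rfl⟩ | ⟨rfl, rfl, h⟩ <;> ext t <;> simp [h, h2]
    rw [hN]
    rcases h with ⟨h, rfl, rfl⟩ | ⟨rfl, h, rfl⟩ | ⟨rfl, rfl, h⟩ <;> simp [h] <;> ring
  · rintro ⟨h1, h2', rfl⟩
    rw [cr h1 h2']
    simp [h1, h2']
    ring
  · rintro ⟨⟨h1, h2', h3⟩, h⟩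
    rw [cr h1 h2', h]
    simp [h1, h2', h3, etaBar]
    ring
  · rintro ⟨⟨h1, h2', h3⟩, h⟩
    rw [cr h1 h2', h]
    simp [h1, h2', h3]
    ring
  · rintro ⟨⟨h1, h2', h3⟩, h⟩
    rw [cr h1 h2', h]
    simp [h1, h2', h3]
    ring
  · rintro ⟨h3, h⟩
    have hN : ∃ r : ZMod p,
        (univ.filter (fun t : ZMod p => t ≠ 0 ∧ c₂ * t ^ 2 + 2 * c₃ * t + c₁ = 0)) = {r} := by
      rcases h with ⟨rfl, h⟩ | ⟨h, rfl⟩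
      · refine ⟨-(2 * c₃) / c₂, ?_⟩
        ext t
        simp only [Finset.mem_filter, Finset.mem_univ, true_and, Finset.mem_singleton]
        rw [eq_div_iff h]
        constructor
        · rintro ⟨ht, e⟩
          exact mul_left_cancel₀ ht (by linear_combination e)
        · intro e
          refine ⟨?_, by linear_combination t * e⟩
          rintro rfl
          simp [h2, h3] at e
      · refine ⟨-c₁ / (2 * c₃), ?_⟩
        ext t
        simp only [Finset.mem_filter, Finset.mem_univ, true_and, Finset.mem_singleton]
        rw [eq_div_iff (mul_ne_zero h2 h3)]
        constructor
        · rintro ⟨ht, e⟩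
          linear_combination e
        · intro e
          refine ⟨?_, by linear_combination e⟩
          rintro rfl
          simp [h] at e
    obtain ⟨r, hr⟩ := hN
    rw [hr]
    rcases h with ⟨rfl, h⟩ | ⟨h, rfl⟩ <;> simp [h, h3] <;> ring
end
end
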